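/- Let $S$ be real-analytic near the origin in $\mathbf{R}^n$, not identically zero, with $S(0)=0$, $\nabla S(0)=0$, and let $g=\min(a_0, l_1-\alpha_1,\dots,l_m-\alpha_m)$. If $s_0<0$ and $s_0>\max(-g,\,-1/\max(o(S),2))$, then for sufficiently small $r_0>0$ the integral $\int_{(-r_0,r_0)^n}\big(\min(|t_1|,\dots,|t_n|,\,S^*(\mathbf{t}))\big)^{s_0}\,\prod_{k=1}^m|\mathbf{t}_k|^{-\alpha_k}\,d\mathbf{t}$ is finite. -/

import Mathlib

/-!
Pointwise `(min (|t₁|, …, |tₙ|, S^*))^s ≤ ∑ᵢ |tᵢ|^s + (S^*)^s`, and both sides depend on the `|tᵢ|`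
only, so each of these terms has to be integrated over the positive part of the cube.

* For `|tᵢ|^s`, distribute each `α_k` over the variables of its group as `α_k = ∑ β_j`. Since
  `|t_j| ≤ |𝐭_k|`, the weight is at most `∏ |t_j|^{-β_j}`, and what is left is a product of
  one-dimensional integrals. They all converge for a suitable choice of the `β_j`, because
  `α_k < l_k + s`.
* For `(S^*)^s`, Cavalieri's principle reduces the integral to the decay of
  `μ {S^* < u^{1/s}} ≲ u^{a₀/s} (log u)^d`, which is integrable at infinity because `a₀ / s < -1`.
-/

open MeasureTheory Real Filter Topology Set
open scoped ENNReal

noncomputable section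

namespace Paper

variable {n m : ℕ}

/-- The monomial `t ^ α`. -/
def monomial (α : Fin n → ℕ) (t : Fin n → ℝ) : ℝ := ∏ i, t i ^ α i

/-- `S` is real-analytic near the origin with Taylor coefficient family `c`:
its Taylor series at the origin converges to it near `0`. -/
def HasTaylorSeriesAtOrigin (S : (Fin n → ℝ) → ℝ) (c : (Fin n → ℕ) → ℝ) : Prop :=
  ∀ᶠ t in 𝓝 (0 : Fin n → ℝ), HasSum (fun α => c α * monomial α t) (S t)

/-- The Newton polyhedron of the Taylor coefficient family `c`: the convex hull of
the octants above the exponents of the nonzero coefficients. -/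
def newtonPolyhedron (c : (Fin n → ℕ) → ℝ) : Set (Fin n → ℝ) :=
  convexHull ℝ {x : Fin n → ℝ | ∃ α : Fin n → ℕ, c α ≠ 0 ∧ ∀ i, (α i : ℝ) ≤ x i}

/-- The vertices (extreme points) of the Newton polyhedron. -/
def newtonVertices (c : (Fin n → ℕ) → ℝ) : Set (Fin n → ℝ) :=
  Set.extremePoints ℝ (newtonPolyhedron c)

/-- `f^*`, the sum of the absolute values of the vertex monomials. -/
def starFn (c : (Fin n → ℕ) → ℝ) (t : Fin n → ℝ) : ℝ :=
  ∑' v : newtonVertices c, ∏ i, |t i| ^ ((v : Fin n → ℝ) i)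

/-- Compact (exposed) faces of the Newton polyhedron; a vertex is a face of dimension zero. -/
def IsCompactFace (c : (Fin n → ℕ) → ℝ) (F : Set (Fin n → ℝ)) : Prop :=
  IsExposed ℝ (newtonPolyhedron c) F ∧ F.Nonempty ∧ IsCompact F

/-- The face polynomial `f_F(t) = ∑_{α ∈ F} f_α t^α`. -/
def facePoly (c : (Fin n → ℕ) → ℝ) (F : Set (Fin n → ℝ)) (t : Fin n → ℝ) : ℝ :=
  ∑' α : {α : Fin n → ℕ // (fun i => (α i : ℝ)) ∈ F}, c α.1 * monomial α.1 t

/-- The order of vanishing of `g` at `x`. -/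
def vanishingOrder (g : (Fin n → ℝ) → ℝ) (x : Fin n → ℝ) : ℕ∞ :=
  sSup {k : ℕ∞ | ∀ j : ℕ, (j : ℕ∞) < k → iteratedFDeriv ℝ j g x = 0}

/-- `o(f)`: the maximum order of a zero of a compact face polynomial on `(ℝ ∖ {0})^n`
(`0` if there are no such zeroes). -/
def newtonOrder (c : (Fin n → ℕ) → ℝ) : ℕ∞ :=
  sSup {k : ℕ∞ | ∃ F : Set (Fin n → ℝ), IsCompactFace c F ∧
    ∃ x : Fin n → ℝ, (∀ i, x i ≠ 0) ∧ facePoly c F x = 0 ∧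
      k ≤ vanishingOrder (facePoly c F) x}

/-- The Euclidean norm `|t_k|` of the `k`-th group of variables. -/
def grpNorm (grp : Fin n → Fin m) (k : Fin m) (t : Fin n → ℝ) : ℝ :=
  Real.sqrt (∑ i ∈ Finset.univ.filter (fun i => grp i = k), t i ^ 2)

/-- The weight `∏_k |t_k|^{-α_k}`. -/
def kernelWeight (grp : Fin n → Fin m) (a : Fin m → ℝ) (t : Fin n → ℝ) : ℝ :=
  ∏ k, grpNorm grp k t ^ (-(a k))

/-- The measure `dμ = ∏_k |t_k|^{-α_k} dm`, `m` being Lebesgue measure. -/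
def fracMeasure (grp : Fin n → Fin m) (a : Fin m → ℝ) : Measure (Fin n → ℝ) :=
  volume.withDensity fun t => ENNReal.ofReal (kernelWeight grp a t)

/-- The characterization (1.5) of the sublevel growth exponents `a₀`, `d₀`. -/
def IsSublevelExponent (grp : Fin n → Fin m) (a : Fin m → ℝ) (c : (Fin n → ℕ) → ℝ)
    (a₀ : ℝ) (d₀ : ℕ) : Prop :=
  0 < a₀ ∧ d₀ ≤ n - 1 ∧ ∃ r₀ > (0 : ℝ), ∀ r : ℝ, 0 < r → r < r₀ →
    ∃ b B : ℝ, 0 < b ∧ 0 < B ∧ ∀ ε : ℝ, 0 < ε → ε < 1/2 →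
      ENNReal.ofReal (b * ε ^ a₀ * |Real.log ε| ^ d₀) <
          fracMeasure grp a {t | (∀ i, t i ∈ Set.Ioo 0 r) ∧ starFn c t < ε} ∧
        fracMeasure grp a {t | (∀ i, t i ∈ Set.Ioo 0 r) ∧ starFn c t < ε} <
          ENNReal.ofReal (B * ε ^ a₀ * |Real.log ε| ^ d₀)

/-- The kernel bounds (1.2a)-(1.2b): `K` is `C¹` off the coordinate hyperplanes,
`|K(t)| ≤ C ∏_k |t_k|^{-α_k}` and `|∂_{t_i} K(t)| ≤ C |t_i|⁻¹ ∏_k |t_k|^{-α_k}`. -/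
def KernelBounds (grp : Fin n → Fin m) (a : Fin m → ℝ) (K : (Fin n → ℝ) → ℝ) : Prop :=
  ContDiffOn ℝ 1 K {t | ∀ i, t i ≠ 0} ∧
  ∃ C : ℝ, ∀ t : Fin n → ℝ, (∀ i, t i ≠ 0) →
    |K t| ≤ C * kernelWeight grp a t ∧
    ∀ i : Fin n, |fderiv ℝ K t (Pi.single i 1)| ≤ C / |t i| * kernelWeight grp a t

/-- The averaging operator (1.1),
`Tf(x, x_{n+1}) = ∫ f(x - t, x_{n+1} - S(t)) K(t) dt`. -/
def radonOp (S K : (Fin n → ℝ) → ℝ) (f : (Fin (n+1) → ℝ) → ℂ) :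
    (Fin (n+1) → ℝ) → ℂ :=
  fun x => ∫ t : Fin n → ℝ, (K t : ℂ) * f (fun j => x j - Fin.snoc (α := fun _ => ℝ) t (S t) j)

/-- The Fourier transform on `ℝ^N`. -/
def fourierTransform {N : ℕ} (g : (Fin N → ℝ) → ℂ) (ξ : Fin N → ℝ) : ℂ :=
  ∫ x : Fin N → ℝ,
    Complex.exp (-2 * (Real.pi : ℂ) * Complex.I * ((∑ i, x i * ξ i : ℝ) : ℂ)) * g x

/-- The inverse Fourier transform on `ℝ^N`. -/
def fourierInv {N : ℕ} (g : (Fin N → ℝ) → ℂ) (x : Fin N → ℝ) : ℂ :=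
  ∫ ξ : Fin N → ℝ,
    Complex.exp (2 * (Real.pi : ℂ) * Complex.I * ((∑ i, x i * ξ i : ℝ) : ℂ)) * g ξ

/-- The Bessel potential `(I - Δ)^{β/2} g`, defined via the Fourier transform. -/
def besselPotential {N : ℕ} (β : ℝ) (g : (Fin N → ℝ) → ℂ) : (Fin N → ℝ) → ℂ :=
  fun x => fourierInv
    (fun ξ => (((1 + ∑ i, ξ i ^ 2) ^ (β / 2) : ℝ) : ℂ) * fourierTransform g ξ) x

/-- `T` is bounded from `L^p(ℝ^N)` to the `L^p` Sobolev space `L^p_β(ℝ^N)`,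
whose norm is `‖(I - Δ)^{β/2} f‖_{L^p}`. -/
def BddLpSobolev {N : ℕ} (p β : ℝ)
    (T : ((Fin N → ℝ) → ℂ) → ((Fin N → ℝ) → ℂ)) : Prop :=
  ∃ C : ℝ, 0 ≤ C ∧ ∀ f : SchwartzMap (Fin N → ℝ) ℂ,
    eLpNorm (besselPotential β (T ⇑f)) (ENNReal.ofReal p) volume ≤
      ENNReal.ofReal C * eLpNorm (⇑f) (ENNReal.ofReal p) volume

/-- `min(|t₁|,...,|tₙ|, S^*(t))`. -/
def minFactor (c : (Fin n → ℕ) → ℝ) (t : Fin n → ℝ) : ℝ :=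
  min (⨅ i, |t i|) (starFn c t)

/-- The analytic family (3.1):
`T_z f(x) = e^{z²} ∫ (min(|t₁|,...,|tₙ|,S^*(t)))^z f(x - t, x_{n+1} - S(t)) K(t) dt`. -/
def radonOpZ (S K : (Fin n → ℝ) → ℝ) (c : (Fin n → ℕ) → ℝ) (z : ℂ)
    (f : (Fin (n+1) → ℝ) → ℂ) : (Fin (n+1) → ℝ) → ℂ :=
  fun x => Complex.exp (z ^ 2) *
    ∫ t : Fin n → ℝ,
      ((minFactor c t : ℂ) ^ z) * (K t : ℂ) * f (fun j => x j - Fin.snoc (α := fun _ => ℝ) t (S t) j)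

/-- The Fourier transform (3.8) of the convolution kernel `ν_z` of `T_z`. -/
def nuHatZ (S K : (Fin n → ℝ) → ℝ) (c : (Fin n → ℕ) → ℝ) (z : ℂ)
    (lam : Fin (n+1) → ℝ) : ℂ :=
  Complex.exp (z ^ 2) *
    ∫ t : Fin n → ℝ,
      Complex.exp (Complex.I *
          (((∑ i, lam i.castSucc * t i) + lam (Fin.last n) * S t : ℝ) : ℂ)) *
        ((minFactor c t : ℂ) ^ z) * (K t : ℂ)

section Cavalieri

variable {α : Type*} [MeasurableSpace α] {μ : Measure α} [IsFiniteMeasure μ]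

theorem lintegral_ofReal_lt_top_of_measureReal_lt_isBigO {F : α → ℝ} {p : ℝ} (hp : p < -1)
    (hF : (fun u ↦ μ.real {x | u < F x}) =O[atTop] fun u ↦ u ^ p) :
    ∫⁻ x, ENNReal.ofReal (F x) ∂μ < ⊤ := by
  -- `F` need not be measurable, so the layer-cake formula is applied to a measurable minorant.
  obtain ⟨G, hGm, hGF, hFG⟩ := exists_measurable_le_lintegral_eq μ fun x ↦ ENNReal.ofReal (F x)
  have hG_ne_top (x : α) : G x ≠ ⊤ := ne_top_of_le_ne_top ENNReal.ofReal_ne_top (hGF x)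
  have hGF_measure : (fun u ↦ μ.real {x | u < (G x).toReal}) =O[atTop]
      fun u ↦ μ.real {x | u < F x} := by
    refine .of_bound 1 ((eventually_ge_atTop 0).mono fun u hu ↦ ?_)
    rw [one_mul, norm_of_nonneg measureReal_nonneg, norm_of_nonneg measureReal_nonneg]
    refine measureReal_mono fun x (hx : u < (G x).toReal) ↦ ?_
    refine lt_of_not_ge fun hFx : F x ≤ u ↦ hx.not_ge ?_
    exact ENNReal.toReal_le_of_le_ofReal hu ((hGF x).trans (ENNReal.ofReal_le_ofReal hFx))
  have hG_antitone : Antitone fun u ↦ μ.real {x | u < (G x).toReal} := fun u v huv ↦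
    measureReal_mono fun x hx ↦ lt_of_le_of_lt huv hx
  have hG_integrable : IntegrableOn (fun u ↦ μ.real {x | u < (G x).toReal}) (Ici 0) :=
    (hG_antitone.locallyIntegrable.locallyIntegrableOn _).integrableOn_of_isBigO_atTop
      (hGF_measure.trans hF)
      ⟨Ioi 1, Ioi_mem_atTop 1, integrableOn_Ioi_rpow_of_lt hp one_pos⟩
  calc ∫⁻ x, ENNReal.ofReal (F x) ∂μ
      = ∫⁻ x, ENNReal.ofReal (G x).toReal ∂μ := by
        rw [hFG]
        exact lintegral_congr fun x ↦ (ENNReal.ofReal_toReal (hG_ne_top x)).symm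
    _ = ∫⁻ u in Ioi (0 : ℝ), μ {x | u < (G x).toReal} :=
        lintegral_eq_lintegral_meas_lt μ (.of_forall fun _ ↦ ENNReal.toReal_nonneg)
          hGm.ennreal_toReal.aemeasurable
    _ = ∫⁻ u in Ioi (0 : ℝ), ENNReal.ofReal (μ.real {x | u < (G x).toReal}) := by
        simp only [measureReal_def, ENNReal.ofReal_toReal (measure_ne_top _ _)]
    _ < ⊤ := (hG_integrable.mono_set Ioi_subset_Ici_self).lintegral_lt_top

theorem lintegral_rpow_lt_top_of_measureReal_sublevel_isBigO {f : α → ℝ} (hf : ∀ x, 0 ≤ f x)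
    {a s : ℝ} (hs : s < 0) (has : 0 < a + s)
    (hsub : (fun ε ↦ μ.real {x | f x < ε}) =O[𝓝[>] 0] fun ε ↦ ε ^ a) :
    ∫⁻ x, ENNReal.ofReal (f x ^ s) ∂μ < ⊤ := by
  have hexp : s⁻¹ * a < -1 := by
    rw [inv_mul_eq_div, div_lt_iff_of_neg hs]
    linarith
  have hroot : Tendsto (fun u : ℝ ↦ u ^ s⁻¹) atTop (𝓝[>] 0) := by
    refine tendsto_nhdsWithin_iff.2
      ⟨?_, (eventually_gt_atTop 0).mono fun u hu ↦ rpow_pos_of_pos hu _⟩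
    simpa using tendsto_rpow_neg_atTop (neg_pos.2 (inv_lt_zero.2 hs))
  refine lintegral_ofReal_lt_top_of_measureReal_lt_isBigO hexp ?_
  have hsuperlevel : (fun u ↦ μ.real {x | u < f x ^ s}) =O[atTop]
      fun u ↦ μ.real {x | f x < u ^ s⁻¹} := by
    refine .of_bound 1 ((eventually_gt_atTop 0).mono fun u hu ↦ ?_)
    rw [one_mul, norm_of_nonneg measureReal_nonneg, norm_of_nonneg measureReal_nonneg]
    refine measureReal_mono fun x (hx : u < f x ^ s) ↦ ?_
    rcases (hf x).eq_or_lt with hfx | hfx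
    · -- `0 ^ s = 0`, so zeros of `f` lie in no superlevel set.
      rw [← hfx, zero_rpow hs.ne] at hx
      exact absurd hx hu.not_gt
    · exact (lt_rpow_inv_iff_of_neg hfx hu hs).2 hx
  refine (hsuperlevel.trans (hsub.comp_tendsto hroot)).congr' .rfl ?_
  filter_upwards [eventually_ge_atTop 0] with u hu
  exact (rpow_mul hu _ _).symm

theorem rpow_mul_abs_log_pow_isBigO {a b : ℝ} (hba : b < a) (d : ℕ) :
    (fun ε ↦ ε ^ a * |log ε| ^ d) =O[𝓝[>] 0] fun ε ↦ ε ^ b := by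
  have hlog := (isLittleO_abs_log_rpow_rpow_nhdsGT_zero (d : ℝ) (sub_neg.2 hba)).isBigO
  refine ((Asymptotics.isBigO_refl (fun ε : ℝ ↦ ε ^ a) _).mul hlog).congr' ?_ ?_
  · simp only [rpow_natCast]; rfl
  · filter_upwards [self_mem_nhdsWithin] with ε hε
    rw [← rpow_add hε, add_sub_cancel]

end Cavalieri

section PositiveCube

variable {ι : Type*}

/-- The part of the cube `(-r, r)^ι` in the open positive orthant. -/
def posCube (ι : Type*) (r : ℝ) : Set (ι → ℝ) := univ.pi fun _ ↦ Ioo 0 r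

theorem ne_zero_of_mem_posCube {r : ℝ} {t : ι → ℝ} (ht : t ∈ posCube ι r) (i : ι) : t i ≠ 0 :=
  (ht i (mem_univ i)).1.ne'

/-- Multiplication of the coordinates by the signs `σ i`; these maps carry the positive orthant to
all the others. -/
def signFlip (σ : ι → ℤˣ) : (ι → ℝ) ≃ᵐ (ι → ℝ) :=
  .ofInvolutive (fun t i ↦ (σ i : ℤ) * t i)
    (fun t ↦ funext fun i ↦ by rcases Int.units_eq_one_or (σ i) with hi | hi <;> simp [hi])
    (by fun_prop)

theorem signFlip_apply (σ : ι → ℤˣ) (t : ι → ℝ) (i : ι) : signFlip σ t i = (σ i : ℤ) * t i := rfl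

theorem abs_signFlip_apply (σ : ι → ℤˣ) (t : ι → ℝ) (i : ι) : |signFlip σ t i| = |t i| := by
  rcases Int.units_eq_one_or (σ i) with hi | hi <;> simp [signFlip_apply, hi]

theorem exists_signFlip_mem_posCube {r : ℝ} {t : ι → ℝ} (ht : ∀ i, t i ∈ Ioo (-r) r)
    (ht0 : ∀ i, t i ≠ 0) : ∃ σ, signFlip σ t ∈ posCube ι r := by
  have hsign (i : ι) : ∃ u : ℤˣ, (u : ℤ) * t i ∈ Ioo 0 r := by
    rcases (ht0 i).lt_or_gt with hi | hi
    · exact ⟨-1, by simpa using ⟨hi, neg_lt.1 (ht i).1⟩⟩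
    · exact ⟨1, by simpa using ⟨hi, (ht i).2⟩⟩
  choose σ hσ using hsign
  exact ⟨σ, fun i _ ↦ hσ i⟩

theorem measurableSet_posCube [Countable ι] (r : ℝ) : MeasurableSet (posCube ι r) :=
  .univ_pi fun _ ↦ measurableSet_Ioo

variable [Fintype ι]

theorem lintegral_posCube_prod_abs_rpow_lt_top {γ : ι → ℝ} (hγ : ∀ i, -1 < γ i) {r : ℝ}
    (hr : 0 < r) : ∫⁻ t in posCube ι r, ENNReal.ofReal (∏ i, |t i| ^ γ i) < ⊤ := by
  have hfactor (i : ι) : IntegrableOn (fun x : ℝ ↦ |x| ^ γ i) (Ioo 0 r) :=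
    ((intervalIntegral.integrableOn_Ioo_rpow_iff hr).2 (hγ i)).congr_fun
      (fun x hx ↦ by simp only [abs_of_pos hx.1]) measurableSet_Ioo
  have hprod := Integrable.fintype_prod hfactor
  rw [← Measure.restrict_pi_pi] at hprod
  exact hprod.lintegral_lt_top

theorem measurePreserving_signFlip (σ : ι → ℤˣ) : MeasurePreserving (signFlip σ) := by
  refine volume_preserving_pi (f := fun i (x : ℝ) ↦ (σ i : ℤ) * x) fun i ↦ ?_
  rcases Int.units_eq_one_or (σ i) with hi | hi
  · simpa [hi] using! MeasurePreserving.id (volume : Measure ℝ)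
  · simpa [hi] using Measure.measurePreserving_neg (volume : Measure ℝ)

theorem lintegral_cube_le_two_pow_mul_lintegral_posCube {f : (ι → ℝ) → ℝ≥0∞}
    (hf : ∀ t u : ι → ℝ, (∀ i, |t i| = |u i|) → f t = f u) (r : ℝ) :
    ∫⁻ t in univ.pi fun _ ↦ Ioo (-r) r, f t ≤
      2 ^ Fintype.card ι * ∫⁻ t in posCube ι r, f t := by
  classical
  have hcover : (univ.pi fun _ : ι ↦ Ioo (-r) r) ≤ᵐ[volume] ⋃ σ, signFlip σ ⁻¹' posCube ι r := by
    have hne : ∀ᵐ t : ι → ℝ, ∀ i, t i ≠ 0 :=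
      ae_all_iff.2 fun i ↦ Measure.ae_eval_ne (fun _ ↦ volume) i 0
    filter_upwards [hne] with t ht0 ht
    exact mem_iUnion.2 (exists_signFlip_mem_posCube (fun i ↦ ht i (mem_univ i)) ht0)
  have hflip (σ : ι → ℤˣ) :
      ∫⁻ t in signFlip σ ⁻¹' posCube ι r, f t = ∫⁻ t in posCube ι r, f t := by
    rw [← (measurePreserving_signFlip σ).setLIntegral_comp_preimage_emb
      (signFlip σ).measurableEmbedding f (posCube ι r)]
    simp only [hf _ _ (abs_signFlip_apply σ _)]
  calc ∫⁻ t in univ.pi fun _ ↦ Ioo (-r) r, f t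
      ≤ ∫⁻ t in ⋃ σ, signFlip σ ⁻¹' posCube ι r, f t := lintegral_mono_set' hcover
    _ ≤ ∑' σ, ∫⁻ t in signFlip σ ⁻¹' posCube ι r, f t := lintegral_iUnion_le _ _
    _ = 2 ^ Fintype.card ι * ∫⁻ t in posCube ι r, f t := by simp [hflip, tsum_fintype]

end PositiveCube

section Weight

theorem exists_nonneg_lt_and_fiberwise_sum_eq {ι κ : Type*} [Fintype ι] [DecidableEq κ] (p : ι → κ)
    {u : ι → ℝ} (hu : ∀ j, 0 < u j) {a : κ → ℝ} (ha : ∀ k, 0 ≤ a k)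
    (hau : ∀ k, a k < ∑ j with p j = k, u j) :
    ∃ β : ι → ℝ, (∀ j, 0 ≤ β j) ∧ (∀ j, β j < u j) ∧ ∀ k, ∑ j with p j = k, β j = a k := by
  have hfiber (k : κ) : 0 < ∑ j with p j = k, u j := (ha k).trans_lt (hau k)
  refine ⟨fun j ↦ a (p j) / (∑ i with p i = p j, u i) * u j,
    fun j ↦ mul_nonneg (div_nonneg (ha _) (hfiber _).le) (hu j).le,
    fun j ↦ mul_lt_of_lt_one_left (hu j) ((div_lt_one (hfiber _)).2 (hau _)), fun k ↦ ?_⟩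
  calc ∑ j with p j = k, a (p j) / (∑ i with p i = p j, u i) * u j
      = ∑ j with p j = k, a k / (∑ i with p i = k, u i) * u j :=
        Finset.sum_congr rfl fun j hj ↦ by rw [(Finset.mem_filter.1 hj).2]
    _ = a k := by rw [← Finset.mul_sum, div_mul_cancel₀ _ (hfiber k).ne']

variable {grp : Fin n → Fin m} {a : Fin m → ℝ}

theorem grpNorm_nonneg (k : Fin m) (t : Fin n → ℝ) : 0 ≤ grpNorm grp k t :=
  Real.sqrt_nonneg _

theorem abs_le_grpNorm (t : Fin n → ℝ) (j : Fin n) : |t j| ≤ grpNorm grp (grp j) t := by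
  refine Real.abs_le_sqrt ?_
  exact Finset.single_le_sum (f := fun i ↦ t i ^ 2) (fun i _ ↦ sq_nonneg _) (by simp)

theorem kernelWeight_nonneg (t : Fin n → ℝ) : 0 ≤ kernelWeight grp a t :=
  Finset.prod_nonneg fun _ _ ↦ rpow_nonneg (grpNorm_nonneg _ _) _

theorem measurable_kernelWeight : Measurable (kernelWeight grp a) := by
  unfold kernelWeight grpNorm
  fun_prop

theorem kernelWeight_congr_abs {t u : Fin n → ℝ} (htu : ∀ i, |t i| = |u i|) :
    kernelWeight grp a t = kernelWeight grp a u := by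
  have hsq (i : Fin n) : t i ^ 2 = u i ^ 2 := (sq_eq_sq_iff_abs_eq_abs _ _).2 (htu i)
  simp only [kernelWeight, grpNorm, hsq]

theorem kernelWeight_le_prod_abs_rpow_neg {β : Fin n → ℝ} (hβ : ∀ j, 0 ≤ β j)
    (hβa : ∀ k, ∑ j with grp j = k, β j = a k) {t : Fin n → ℝ} (ht : ∀ j, t j ≠ 0) :
    kernelWeight grp a t ≤ ∏ j, |t j| ^ (-β j) := by
  have hle : ∏ j, |t j| ^ β j ≤ ∏ k, grpNorm grp k t ^ a k :=
    calc ∏ j, |t j| ^ β j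
        ≤ ∏ j, grpNorm grp (grp j) t ^ β j :=
          Finset.prod_le_prod (fun j _ ↦ rpow_nonneg (abs_nonneg _) _) fun j _ ↦
            rpow_le_rpow (abs_nonneg _) (abs_le_grpNorm t j) (hβ j)
      _ = ∏ k, ∏ j with grp j = k, grpNorm grp k t ^ β j := by
          rw [← Finset.prod_fiberwise Finset.univ grp]
          refine Finset.prod_congr rfl fun k _ ↦ Finset.prod_congr rfl fun j hj ↦ ?_
          rw [(Finset.mem_filter.1 hj).2]
      _ = ∏ k, grpNorm grp k t ^ a k := by
          simp only [← hβa, rpow_sum_of_nonneg (grpNorm_nonneg _ t) fun j _ ↦ hβ j]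
  have hpos : 0 < ∏ j, |t j| ^ β j :=
    Finset.prod_pos fun j _ ↦ rpow_pos_of_pos (abs_pos.2 (ht j)) _
  simpa only [kernelWeight, rpow_neg (grpNorm_nonneg _ t), rpow_neg (abs_nonneg _),
    Finset.prod_inv_distrib] using inv_anti₀ hpos hle

theorem setLIntegral_fracMeasure (F : (Fin n → ℝ) → ℝ) {A : Set (Fin n → ℝ)}
    (hA : MeasurableSet A) :
    ∫⁻ t in A, ENNReal.ofReal (F t) ∂fracMeasure grp a =
      ∫⁻ t in A, ENNReal.ofReal (F t * kernelWeight grp a t) := by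
  rw [fracMeasure, setLIntegral_withDensity_eq_setLIntegral_mul_non_measurable _
    measurable_kernelWeight.ennreal_ofReal _ hA (.of_forall fun _ ↦ ENNReal.ofReal_lt_top)]
  simp only [Pi.mul_apply, ← ENNReal.ofReal_mul (kernelWeight_nonneg _), mul_comm]

theorem lintegral_posCube_prod_abs_rpow_fracMeasure_lt_top {v : Fin n → ℝ} (hv : ∀ j, -1 < v j)
    (ha : ∀ k, 0 ≤ a k) (hav : ∀ k, a k < ∑ j with grp j = k, (1 + v j)) {r : ℝ} (hr : 0 < r) :
    ∫⁻ t in posCube (Fin n) r, ENNReal.ofReal (∏ j, |t j| ^ v j) ∂fracMeasure grp a < ⊤ := by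
  obtain ⟨β, hβ, hβv, hβa⟩ := exists_nonneg_lt_and_fiberwise_sum_eq grp
    (fun j ↦ neg_lt_iff_pos_add'.1 (hv j)) ha hav
  have hγ (j : Fin n) : -1 < v j - β j := by linarith [hβv j]
  rw [setLIntegral_fracMeasure _ (measurableSet_posCube r)]
  refine (setLIntegral_mono' (measurableSet_posCube r) fun t ht ↦
    ENNReal.ofReal_le_ofReal ?_).trans_lt (lintegral_posCube_prod_abs_rpow_lt_top hγ hr)
  have ht0 := ne_zero_of_mem_posCube ht
  calc (∏ j, |t j| ^ v j) * kernelWeight grp a t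
      ≤ (∏ j, |t j| ^ v j) * ∏ j, |t j| ^ (-β j) := by
        gcongr
        exact kernelWeight_le_prod_abs_rpow_neg hβ hβa ht0
    _ = ∏ j, |t j| ^ (v j - β j) := by
        simp only [← Finset.prod_mul_distrib, ← rpow_add (abs_pos.2 (ht0 _)), sub_eq_add_neg]

theorem lintegral_posCube_abs_rpow_fracMeasure_lt_top {s : ℝ} (hs : -1 < s) (hs0 : s ≤ 0)
    (ha : ∀ k, 0 ≤ a k) (has : ∀ k, a k < (Finset.univ.filter fun i ↦ grp i = k).card + s)
    (i : Fin n) {r : ℝ} (hr : 0 < r) :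
    ∫⁻ t in posCube (Fin n) r, ENNReal.ofReal (|t i| ^ s) ∂fracMeasure grp a < ⊤ := by
  have hsingle (t : Fin n → ℝ) : ∏ j, |t j| ^ (Pi.single i s : Fin n → ℝ) j = |t i| ^ s := by
    rw [Fintype.prod_eq_single i fun j hj ↦ by rw [Pi.single_eq_of_ne hj, rpow_zero],
      Pi.single_eq_same]
  have hfiber (k : Fin m) : s ≤ ∑ j with grp j = k, (Pi.single i s : Fin n → ℝ) j := by
    rw [Finset.sum_pi_single']
    split_ifs <;> simp [hs0]
  simp only [← hsingle]
  refine lintegral_posCube_prod_abs_rpow_fracMeasure_lt_top (fun j ↦ ?_) ha (fun k ↦ ?_) hr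
  · rcases eq_or_ne j i with rfl | hj
    · simpa using hs
    · simp [hj]
  · rw [Finset.sum_add_distrib, Finset.sum_const, nsmul_one]
    linarith [has k, hfiber k]

theorem fracMeasure_posCube_lt_top (ha : ∀ k, 0 ≤ a k)
    (hal : ∀ k, a k < (Finset.univ.filter fun i ↦ grp i = k).card) {r : ℝ} (hr : 0 < r) :
    fracMeasure grp a (posCube (Fin n) r) < ⊤ := by
  simpa using lintegral_posCube_prod_abs_rpow_fracMeasure_lt_top (v := 0) (grp := grp)
    (fun _ ↦ by simp) ha (by simpa using hal) hr

end Weight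

section MinFactor

variable {grp : Fin n → Fin m} {a : Fin m → ℝ} {c : (Fin n → ℕ) → ℝ}

theorem starFn_nonneg (t : Fin n → ℝ) : 0 ≤ starFn c t :=
  tsum_nonneg fun _ ↦ Finset.prod_nonneg fun _ _ ↦ rpow_nonneg (abs_nonneg _) _

theorem minFactor_congr_abs {t u : Fin n → ℝ} (htu : ∀ i, |t i| = |u i|) :
    minFactor c t = minFactor c u := by
  simp only [minFactor, starFn, htu]

theorem minFactor_rpow_le [Nonempty (Fin n)] (s : ℝ) (t : Fin n → ℝ) :
    minFactor c t ^ s ≤ ∑ i, |t i| ^ s + starFn c t ^ s := by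
  have habs (i : Fin n) : 0 ≤ |t i| ^ s := rpow_nonneg (abs_nonneg _) _
  rcases min_choice (⨅ i, |t i|) (starFn c t) with hmin | hmin <;> rw [minFactor, hmin]
  · obtain ⟨i, hi⟩ := exists_eq_ciInf_of_finite (f := fun i ↦ |t i|)
    rw [← hi]
    exact (Finset.single_le_sum (fun j _ ↦ habs j) (Finset.mem_univ i)).trans
      (le_add_of_nonneg_right (rpow_nonneg (starFn_nonneg t) _))
  · exact le_add_of_nonneg_left (Finset.sum_nonneg fun i _ ↦ habs i)

theorem IsSublevelExponent.exists_sublevel_isBigO {a₀ : ℝ} {d₀ : ℕ}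
    (ha₀ : IsSublevelExponent grp a c a₀ d₀) : ∃ R > 0, ∀ r, 0 < r → r < R →
      (fun ε ↦ ((fracMeasure grp a).restrict (posCube (Fin n) r)).real {t | starFn c t < ε})
        =O[𝓝[>] 0] fun ε ↦ ε ^ a₀ * |log ε| ^ d₀ := by
  obtain ⟨-, -, R, hR, hgrowth⟩ := ha₀
  refine ⟨R, hR, fun r hr hrR ↦ ?_⟩
  obtain ⟨_, B, -, hB, hupper⟩ := hgrowth r hr hrR
  refine .of_bound B ?_
  filter_upwards [Ioo_mem_nhdsGT (show (0 : ℝ) < 1 / 2 by norm_num)] with ε ⟨hε, hε'⟩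
  have hset : {t | starFn c t < ε} ∩ posCube (Fin n) r =
      {t | (∀ i, t i ∈ Ioo 0 r) ∧ starFn c t < ε} := by
    ext t
    simp [posCube, and_comm]
  rw [norm_of_nonneg measureReal_nonneg, norm_of_nonneg (by positivity), ← mul_assoc,
    measureReal_def, Measure.restrict_apply' (measurableSet_posCube r), hset]
  exact ENNReal.toReal_le_of_le_ofReal (by positivity) (hupper ε hε hε').2.le

theorem IsSublevelExponent.exists_lintegral_starFn_rpow_lt_top {a₀ : ℝ} {d₀ : ℕ}
    (ha₀ : IsSublevelExponent grp a c a₀ d₀) (ha : ∀ k, 0 ≤ a k)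
    (hal : ∀ k, a k < (Finset.univ.filter fun i ↦ grp i = k).card)
    {s : ℝ} (hs : s < 0) (has : 0 < a₀ + s) : ∃ R > 0, ∀ r, 0 < r → r < R →
      ∫⁻ t in posCube (Fin n) r, ENNReal.ofReal (starFn c t ^ s) ∂fracMeasure grp a < ⊤ := by
  obtain ⟨R, hR, hsub⟩ := ha₀.exists_sublevel_isBigO
  refine ⟨R, hR, fun r hr hrR ↦ ?_⟩
  have : Fact (fracMeasure grp a (posCube (Fin n) r) < ⊤) := ⟨fracMeasure_posCube_lt_top ha hal hr⟩
  -- Lowering the exponent from `a₀` to `b > -s` absorbs the logarithm.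
  obtain ⟨b, hsb, hba⟩ := exists_between (neg_lt_iff_pos_add.2 has)
  exact lintegral_rpow_lt_top_of_measureReal_sublevel_isBigO starFn_nonneg hs
    (neg_lt_iff_pos_add.1 hsb) ((hsub r hr hrR).trans (rpow_mul_abs_log_pow_isBigO hba d₀))

theorem lintegral_posCube_minFactor_rpow_lt_top [Nonempty (Fin n)] {s r : ℝ}
    (habs : ∀ i, ∫⁻ t in posCube (Fin n) r, ENNReal.ofReal (|t i| ^ s) ∂fracMeasure grp a < ⊤)
    (hstar : ∫⁻ t in posCube (Fin n) r, ENNReal.ofReal (starFn c t ^ s) ∂fracMeasure grp a < ⊤) :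
    ∫⁻ t in posCube (Fin n) r, ENNReal.ofReal (minFactor c t ^ s) ∂fracMeasure grp a < ⊤ := by
  have hle (t : Fin n → ℝ) : ENNReal.ofReal (minFactor c t ^ s) ≤
      ∑ i, ENNReal.ofReal (|t i| ^ s) + ENNReal.ofReal (starFn c t ^ s) := by
    rw [← ENNReal.ofReal_sum_of_nonneg fun i _ ↦ rpow_nonneg (abs_nonneg _) _,
      ← ENNReal.ofReal_add (by positivity) (rpow_nonneg (starFn_nonneg t) _)]
    exact ENNReal.ofReal_le_ofReal (minFactor_rpow_le s t)
  refine (lintegral_mono hle).trans_lt ?_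
  rw [lintegral_add_left (by fun_prop), lintegral_finsetSum _ (by fun_prop)]
  exact ENNReal.add_lt_top.2 ⟨ENNReal.sum_lt_top.2 fun i _ ↦ habs i, hstar⟩

end MinFactor

theorem integral_finite_general
    (n m : ℕ) (hn : 0 < n)
    (grp : Fin n → Fin m)
    (l : Fin m → ℕ) (hl : ∀ k, l k = (Finset.univ.filter (fun i => grp i = k)).card)
    (a : Fin m → ℝ) (ha : ∀ k, 0 ≤ a k)
    (c : (Fin n → ℕ) → ℝ)
    (a₀ : ℝ) (d₀ : ℕ) (ha₀ : IsSublevelExponent grp a c a₀ d₀)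
    (g : ℝ) (hg : g = min a₀ (⨅ k, ((l k : ℝ) - a k)))
    (s₀ : ℝ) (hs₀neg : s₀ < 0) (hs₀ : max (-g) (-1) < s₀) :
    ∃ r₁ > (0 : ℝ), ∀ r₀ : ℝ, 0 < r₀ → r₀ ≤ r₁ →
      ∫⁻ t in Set.univ.pi (fun _ : Fin n => Set.Ioo (-r₀) r₀),
        ENNReal.ofReal (minFactor c t ^ s₀ * kernelWeight grp a t) < ⊤ := by
  have : Nonempty (Fin n) := ⟨⟨0, hn⟩⟩
  obtain ⟨hgs, hs1⟩ := max_lt_iff.1 hs₀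
  have has₀ : 0 < a₀ + s₀ := by linarith [hg.trans_le (min_le_left _ _)]
  have hal (k : Fin m) : a k < (Finset.univ.filter fun i ↦ grp i = k).card + s₀ := by
    have hgk : g ≤ l k - a k :=
      (hg.trans_le (min_le_right _ _)).trans (ciInf_le (finite_range _).bddBelow k)
    rw [← hl k]
    linarith
  obtain ⟨R, hR, hstar⟩ :=
    ha₀.exists_lintegral_starFn_rpow_lt_top ha (fun k ↦ by linarith [hal k]) hs₀neg has₀
  refine ⟨R / 2, half_pos hR, fun r hr hrR ↦ ?_⟩
  have hpos := lintegral_posCube_minFactor_rpow_lt_top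
    (fun i ↦ lintegral_posCube_abs_rpow_fracMeasure_lt_top hs1 hs₀neg.le ha hal i hr)
    (hstar r hr (by linarith))
  rw [setLIntegral_fracMeasure _ (measurableSet_posCube r)] at hpos
  refine (lintegral_cube_le_two_pow_mul_lintegral_posCube (fun t u htu ↦ ?_) r).trans_lt
    (ENNReal.mul_lt_top (by simp) hpos)
  rw [minFactor_congr_abs htu, kernelWeight_congr_abs htu]

/-- The estimate (3.3)-(3.7): if `s₀ < 0` and `s₀ > max(-g, -1/max(o(S),2))` then for
sufficiently small `r₀ > 0` the integral
`∫_{(-r₀,r₀)^n} (min(|t₁|,...,|tₙ|, S^*(t)))^{s₀} ∏_k |t_k|^{-α_k} dt` is finite. -/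
theorem integral_finite
    (n m : ℕ) (hn : 0 < n) (hm : 0 < m)
    (grp : Fin n → Fin m) (hgrp : Function.Surjective grp)
    (l : Fin m → ℕ) (hl : ∀ k, l k = (Finset.univ.filter (fun i => grp i = k)).card)
    (a : Fin m → ℝ) (ha : ∀ k, 0 ≤ a k ∧ a k < l k)
    (S : (Fin n → ℝ) → ℝ) (c : (Fin n → ℕ) → ℝ)
    (hSc : HasTaylorSeriesAtOrigin S c) (hc : c ≠ 0)
    (hS0 : S 0 = 0) (hS1 : fderiv ℝ S 0 = 0)
    (a₀ : ℝ) (d₀ : ℕ) (ha₀ : IsSublevelExponent grp a c a₀ d₀)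
    (oS : ℕ) (hoS : newtonOrder c = (oS : ℕ∞))
    (g : ℝ) (hg : g = min a₀ (⨅ k, ((l k : ℝ) - a k)))
    (s₀ : ℝ) (hs₀neg : s₀ < 0) (hs₀ : max (-g) (-(1 / max (oS : ℝ) 2)) < s₀) :
    ∃ r₁ > (0 : ℝ), ∀ r₀ : ℝ, 0 < r₀ → r₀ ≤ r₁ →
      ∫⁻ t in Set.univ.pi (fun _ : Fin n => Set.Ioo (-r₀) r₀),
        ENNReal.ofReal (minFactor c t ^ s₀ * kernelWeight grp a t) < ⊤ := by
  have h_one : (1 : ℝ) ≤ max (oS : ℝ) 2 := one_le_two.trans (le_max_right _ _)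
  exact integral_finite_general n m hn grp l hl a (fun k ↦ (ha k).1) c a₀ d₀ ha₀ g hg s₀ hs₀neg
    ((max_le_max_left _ (neg_le_neg (div_le_one_of_le₀ h_one (by positivity)))).trans_lt hs₀)

end Paper
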